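/- Let S be a cancellative monoid, let F be a normed field whose norm satisfies ‖(n : F)‖ = n for every natural number n, and let A be a non-unital normed algebra over F whose underlying metric space is complete. Suppose A carries an S-grading: an internal direct sum decomposition A = ⊕_{s ∈ S} A_s into F-submodules A_s with A_s * A_t ⊆ A_{s*t} for all s, t ∈ S, such that only finitely many components A_s are nonzero, and such that the identity component A_e (the component at the neutral element of S) is a closed subset of A. If A_e is nil (every a ∈ A_e satisfies a^n = 0 for some n ≥ 1), then A is nilpotent (there exists N ≥ 1 such that every product of N elements of A is zero). -/

import Mathlib

/-!
The proof combines three ingredients.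

* *Uniform nil index* (`exists_nil_bound`). The closed subspace `A_e` is a Baire space and the
  union of the closed sets `{a | a ^ n = 0}`, so one of them contains a ball around some `a₀`.
  For `b ∈ A_e` the polynomial `t ↦ (a₀ + t b) ^ n` vanishes at `t = 1 / k` for all large `k`,
  hence its top coefficient `b ^ n` is zero.
* *Nagata–Higman* (`nagata_higman`). In characteristic zero, nil of bounded index implies
  nilpotent. Linearising `b ^ (n + 1) = 0` gives `∑ i, x ^ i * y * x ^ (n - i) = 0`, and summing
  `x ^ (n - i) * z * y ^ j * x ^ i * y ^ (n - j)` over `i, j` in both orders gives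
  `x ^ n * z * y ^ n = 0`; induction on `n` then applies to ideals containing all `n`-th powers.
* *Pigeonhole* (`initialProd_mem`, `homogeneous_prod_eq_zero`). In a long nonzero product of homogeneous
  elements the degrees of the initial segments lie in the finite support, so one degree is repeated
  many times. By left cancellation the blocks between repetitions have degree `1`, so the product
  contains a product of many elements of `A_e`, which vanishes.

The algebra is embedded in its unitization, so that the powers `x ^ 0` and the powers of submodules
are available.
-/

/-- `nupow a n` is the `(n+1)`-fold product `a * a * ⋯ * a` (so `nupow a n = a ^ (n+1)`);
this makes sense in any (possibly non-unital) multiplicative structure. -/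
def nupow {A : Type*} [Mul A] (a : A) : ℕ → A
  | 0 => a
  | n + 1 => nupow a n * a

/-- `A` is nil: every element `a` satisfies `a ^ n = 0` for some `n ≥ 1`. -/
def IsNilAlgebra (A : Type*) [Mul A] [Zero A] : Prop :=
  ∀ a : A, ∃ n : ℕ, nupow a n = 0

/-- `A` is nilpotent: there is `N ≥ 1` such that every product of `N` elements of `A`
(here written as `a` followed by a list `l` of the remaining `N - 1` factors) is zero. -/
def IsNilpotentAlgebra (A : Type*) [Mul A] [Zero A] : Prop :=
  ∃ N : ℕ, 1 ≤ N ∧ ∀ (a : A) (l : List A), l.length + 1 = N → l.foldl (· * ·) a = 0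

open scoped Pointwise

/-! ### Polynomials with vector coefficients -/

theorem coeff_mem_of_infinite {F V : Type*} [Field F] [AddCommGroup V] [Module F V]
    (J : Submodule F V) (n : ℕ) (c : ℕ → V)
    (h : {t : F | ∑ k ∈ Finset.range n, t ^ k • c k ∈ J}.Infinite) :
    ∀ k < n, c k ∈ J := by
  intro k hk
  rw [← Submodule.Quotient.mk_eq_zero, ← Module.forall_dual_apply_eq_zero_iff F]
  intro φ
  -- testing against a functional on the quotient reduces to a scalar polynomial
  let p : Polynomial F :=
    ∑ k ∈ Finset.range n, Polynomial.monomial k (φ (Submodule.Quotient.mk (c k)))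
  have hp : p = 0 := by
    refine Polynomial.eq_zero_of_infinite_isRoot p (h.mono ?_)
    intro t ht
    have h0 : φ (J.mkQ (∑ k ∈ Finset.range n, t ^ k • c k)) = 0 := by
      rw [Submodule.mkQ_apply, (Submodule.Quotient.mk_eq_zero J).2 ht, map_zero]
    simp only [map_sum, map_smul, smul_eq_mul, Submodule.mkQ_apply] at h0
    simp only [Set.mem_ofPred_eq, Polynomial.IsRoot, p, Polynomial.eval_finsetSum,
      Polynomial.eval_monomial]
    rw [← h0]
    exact Finset.sum_congr rfl fun i _ => mul_comm _ _
  have := congrArg (fun q => Polynomial.coeff q k) hp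
  simpa [p, Polynomial.finsetSum_coeff, Polynomial.coeff_monomial, hk] using this

theorem exists_expansion {F U : Type*} [Field F] [Ring U] [Algebra F U] (x y : U) (n : ℕ) :
    ∃ c : ℕ → U, (∀ t : F, (x + t • y) ^ n = ∑ k ∈ Finset.range (n + 1), t ^ k • c k) ∧
      c 0 = x ^ n ∧ c n = y ^ n ∧ (∀ k, n < k → c k = 0) ∧
      c 1 = ∑ i ∈ Finset.range n, x ^ i * y * x ^ (n - 1 - i) := by
  induction n with
  | zero =>
    refine ⟨fun k => if k = 0 then 1 else 0, ?_⟩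
    simp
    intro k hk h
    omega
  | succ n ih =>
    obtain ⟨c, hc, h0, hn, hgt, h1⟩ := ih
    refine ⟨fun k => c k * x + (if k = 0 then 0 else c (k - 1) * y), ?_, ?_, ?_, ?_, ?_⟩
    · intro t
      simp only [smul_add, Finset.sum_add_distrib]
      rw [Finset.sum_range_succ, hgt (n + 1) (by omega), Finset.sum_range_succ' _ (n + 1)]
      simp only [zero_mul, smul_zero, add_zero, if_true, Nat.add_eq_zero_iff, one_ne_zero,
        and_false, if_false, Nat.add_sub_cancel]
      rw [pow_succ, mul_add, hc, Finset.sum_mul, Finset.sum_mul]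
      congr 1
      · simp
      · refine Finset.sum_congr rfl fun k _ => ?_
        rw [pow_succ, mul_smul, smul_mul_assoc, mul_smul_comm]
    · simp [h0, pow_succ]
    · simp [hgt (n + 1) (by omega), hn, pow_succ]
    · intro k hk
      have : k ≠ 0 := by omega
      simp [this, hgt k (by omega), hgt (k - 1) (by omega)]
    · simp only [one_ne_zero, if_false, Nat.sub_self, h0, h1, Nat.add_sub_cancel]
      rw [Finset.sum_range_succ, Finset.sum_mul]
      simp only [Nat.sub_self, pow_zero, mul_one]
      congr 1
      refine Finset.sum_congr rfl fun i hi => ?_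
      have hi' := Finset.mem_range.1 hi
      rw [mul_assoc, ← pow_succ, show n - 1 - i + 1 = n - i by omega]

/-! ### The Nagata–Higman theorem -/

/-- The Nagata–Higman identity `x ^ n * z * y ^ n = 0`, relative to a submodule `J` stable under
multiplication by `B`. -/
theorem pow_mul_pow_mem {F U : Type*} [Field F] [CharZero F] [Ring U] [Algebra F U]
    (B J : Submodule F U) (hB : ∀ x ∈ B, ∀ y ∈ B, x * y ∈ B)
    (hl : ∀ b ∈ B, ∀ x ∈ J, b * x ∈ J) (hr : ∀ x ∈ J, ∀ b ∈ B, x * b ∈ J)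
    (n : ℕ) (hn : ∀ b ∈ B, b ^ (n + 1) ∈ J) :
    ∀ x ∈ B, ∀ z ∈ B, ∀ y ∈ B, x ^ n * z * y ^ n ∈ J := by
  have lin : ∀ x ∈ B, ∀ y ∈ B, ∑ i ∈ Finset.range (n + 1), x ^ i * y * x ^ (n - i) ∈ J := by
    intro x hx y hy
    obtain ⟨c, hc, -, -, -, h1⟩ := exists_expansion (F := F) x y (n + 1)
    have := coeff_mem_of_infinite J (n + 1 + 1) c ?_ 1 (by omega)
    · rwa [h1] at this
    · convert Set.infinite_univ (α := F)
      ext t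
      simp only [Set.mem_ofPred_eq, Set.mem_univ, iff_true]
      rw [← hc]
      exact hn _ (B.add_mem hx (B.smul_mem t hy))
  have hlp : ∀ b ∈ B, ∀ k : ℕ, ∀ x ∈ J, b ^ k * x ∈ J := by
    intro b hb k
    induction k with
    | zero => intro x hx; simpa using hx
    | succ k ih => intro x hx; rw [pow_succ, mul_assoc]; exact ih _ (hl b hb x hx)
  have hrp : ∀ b ∈ B, ∀ k : ℕ, ∀ x ∈ J, x * b ^ k ∈ J := by
    intro b hb k
    induction k with
    | zero => intro x hx; simpa using hx
    | succ k ih => intro x hx; rw [pow_succ, ← mul_assoc]; exact hr _ (ih x hx) b hb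
  have hBp : ∀ b ∈ B, ∀ k : ℕ, ∀ x ∈ B, x * b ^ k ∈ B := by
    intro b hb k
    induction k with
    | zero => intro x hx; simpa using hx
    | succ k ih => intro x hx; rw [pow_succ, ← mul_assoc]; exact hB _ (ih x hx) b hb
  intro x hx z hz y hy
  have h1 : ∑ j ∈ Finset.range (n + 1), ∑ i ∈ Finset.range (n + 1),
      x ^ (n - i) * z * y ^ j * x ^ i * y ^ (n - j) ∈ J := by
    refine J.sum_mem fun j _ => ?_
    have := hrp y hy (n - j) _ (lin x hx (z * y ^ j) (hBp y hy j z hz))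
    rw [← Finset.sum_range_reflect, Finset.sum_mul] at this
    convert this using 1
    refine Finset.sum_congr rfl fun i hi => ?_
    have hi' := Finset.mem_range.1 hi
    rw [show n + 1 - 1 - i = n - i by omega, show n - (n - i) = i by omega]
    simp only [mul_assoc]
  rw [Finset.sum_comm, Finset.sum_range_succ'] at h1
  have h2 : ∑ i ∈ Finset.range n, ∑ j ∈ Finset.range (n + 1),
      x ^ (n - (i + 1)) * z * y ^ j * x ^ (i + 1) * y ^ (n - j) ∈ J := by
    refine J.sum_mem fun i _ => ?_
    have hxi : x ^ (i + 1) ∈ B := by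
      rw [pow_succ']
      exact hBp x hx i x hx
    have := hlp x hx (n - (i + 1)) _ (hl z hz _ (lin y hy _ hxi))
    rw [Finset.mul_sum, Finset.mul_sum] at this
    convert this using 1
    refine Finset.sum_congr rfl fun j _ => ?_
    simp only [mul_assoc]
  have h3 := (J.add_mem_iff_right h2).1 h1
  have h4 : ∑ j ∈ Finset.range (n + 1), x ^ (n - 0) * z * y ^ j * x ^ 0 * y ^ (n - j)
      = ((n + 1 : ℕ) : F) • (x ^ n * z * y ^ n) := by
    rw [Finset.sum_congr rfl (g := fun _ => x ^ n * z * y ^ n), Finset.sum_const,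
      Finset.card_range, Nat.cast_smul_eq_nsmul]
    intro j hj
    have hj' := Finset.mem_range.1 hj
    rw [pow_zero, mul_one, mul_assoc (x ^ (n - 0) * z), ← pow_add,
      show j + (n - j) = n by omega, Nat.sub_zero]
  rw [h4] at h3
  exact (J.smul_mem_iff (Nat.cast_ne_zero.2 (Nat.succ_ne_zero n))).1 h3

/-- Nagata–Higman relative to an ideal `J`: stating it for all `J` replaces passing to quotients in
the induction on the nil index. -/
theorem nagata_higman {F U : Type*} [Field F] [CharZero F] [Ring U] [Algebra F U]
    (B : Submodule F U) (hB : ∀ x ∈ B, ∀ y ∈ B, x * y ∈ B) (n : ℕ) :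
    ∀ J : Submodule F U, (∀ b ∈ B, ∀ x ∈ J, b * x ∈ J) → (∀ x ∈ J, ∀ b ∈ B, x * b ∈ J) →
      (∀ b ∈ B, b ^ (n + 1) ∈ J) → ∃ m : ℕ, B ^ (m + 1) ≤ J := by
  induction n with
  | zero =>
    intro J _ _ h
    exact ⟨0, fun x hx => by simpa using h x (by simpa using hx)⟩
  | succ n ih =>
    intro J hl hr h
    have key := pow_mul_pow_mem B J hB hl hr (n + 1) h
    -- `L` is the set of `x` with `x * z * y ^ (n + 1) ∈ J` for all `z, y ∈ B`, and the second ideal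
    -- is the set of `y` with `x * z * y ∈ J` for all `x ∈ L`, `z ∈ B`; both are stable under `B`
    -- and contain every `(n + 1)`-st power, so the induction hypothesis applies to both
    let L : Submodule F U :=
      { carrier := {x | ∀ z ∈ B, ∀ y ∈ B, x * z * y ^ (n + 1) ∈ J}
        add_mem' := fun {a b} ha hb z hz y hy => by
          rw [add_mul, add_mul]; exact J.add_mem (ha z hz y hy) (hb z hz y hy)
        zero_mem' := fun z _ y _ => by simp
        smul_mem' := fun c x hx z hz y hy => by
          rw [smul_mul_assoc, smul_mul_assoc]; exact J.smul_mem c (hx z hz y hy) }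
    let L' : Submodule F U :=
      { carrier := {y | ∀ x ∈ L, ∀ z ∈ B, x * z * y ∈ J}
        add_mem' := fun {a b} ha hb x hx z hz => by
          rw [mul_add]; exact J.add_mem (ha x hx z hz) (hb x hx z hz)
        zero_mem' := fun x _ z _ => by simp
        smul_mem' := fun c y hy x hx z hz => by
          rw [mul_smul_comm]; exact J.smul_mem c (hy x hx z hz) }
    obtain ⟨m, hm⟩ := ih L
      (fun b hb x hx z hz y hy => by
        have := hl b hb _ (hx z hz y hy)
        simpa only [mul_assoc] using this)
      (fun x hx b hb z hz y hy => by
        have := hx (b * z) (hB b hb z hz) y hy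
        simpa only [mul_assoc] using this)
      (fun x hx z hz y hy => key x hx z hz y hy)
    obtain ⟨m', hm'⟩ := ih L'
      (fun b hb y hy x hx z hz => by
        have := hy x hx (z * b) (hB z hz b hb)
        simpa only [mul_assoc] using this)
      (fun y hy b hb x hx z hz => by
        have := hr _ (hy x hx z hz) b hb
        simpa only [mul_assoc] using this)
      (fun y hy x hx z hz => hx z hz y hy)
    refine ⟨m + 1 + (m' + 1), ?_⟩
    rw [show m + 1 + (m' + 1) + 1 = (m + 1) + 1 + (m' + 1) by ring, pow_add, pow_succ B (m + 1),
      Submodule.mul_le]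
    intro p hp q hq
    have hq' := hm' hq
    induction hp using Submodule.mul_induction_on' with
    | mem_mul_mem x hx z hz => exact hq' x (hm hx) z hz
    | add a _ b _ ha hb => rw [add_mul]; exact J.add_mem ha hb

/-! ### Uniform nil index -/

theorem inr_nupow (F : Type*) {A : Type*} [Field F] [NonUnitalRing A] [Module F A]
    [IsScalarTower F A A] [SMulCommClass F A A] (a : A) (n : ℕ) :
    (Unitization.inr (nupow a n) : Unitization F A) = (Unitization.inr a) ^ (n + 1) := by
  induction n with
  | zero => simp [nupow]
  | succ n ih => rw [nupow, Unitization.inr_mul, ih, pow_succ _ (n + 1)]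

theorem continuous_nupow {A : Type*} [NonUnitalNormedRing A] (n : ℕ) :
    Continuous fun a : A => nupow a n := by
  induction n with
  | zero => exact continuous_id
  | succ n ih => exact ih.mul continuous_id

/-- A closed nil subspace is nil of bounded index, by the Baire category theorem. -/
theorem exists_nil_bound {F A : Type*} [NormedField F] [NonUnitalNormedRing A] [NormedSpace F A]
    [IsScalarTower F A A] [SMulCommClass F A A] [CompleteSpace A]
    (hnorm : ∀ n : ℕ, ‖(n : F)‖ = n) (E : Submodule F A) (hclosed : IsClosed (E : Set A))
    (hnil : ∀ a ∈ E, ∃ n : ℕ, nupow a n = 0) :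
    ∃ n : ℕ, ∀ b ∈ E, (Unitization.inr b : Unitization F A) ^ (n + 1) = 0 := by
  have : CompleteSpace E := hclosed.completeSpace_coe
  obtain ⟨n, a₀, ha₀⟩ := nonempty_interior_of_iUnion_of_closed
    (f := fun n : ℕ => {a : E | nupow (a : A) n = 0})
    (fun n => isClosed_eq ((continuous_nupow n).comp continuous_subtype_val) continuous_const)
    (by
      ext a
      simpa using hnil a a.2)
  obtain ⟨ε, hε, hball⟩ := Metric.isOpen_iff.1 isOpen_interior a₀ ha₀
  refine ⟨n, fun b hb => ?_⟩
  obtain ⟨c, hc, -, htop, -, -⟩ := exists_expansion (F := F)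
    (Unitization.inr (a₀ : A) : Unitization F A) (Unitization.inr b) (n + 1)
  have hmem := coeff_mem_of_infinite (⊥ : Submodule F (Unitization F A)) (n + 1 + 1) c ?_ (n + 1)
    (by omega)
  · rw [Submodule.mem_bot, htop] at hmem
    exact hmem
  obtain ⟨K, hK⟩ := exists_nat_gt (‖b‖ / ε)
  -- the scalars `1 / (K + k + 1)` are distinct and small enough
  refine Set.infinite_of_injective_forall_mem (f := fun k : ℕ => (((K + k + 1 : ℕ) : F))⁻¹) ?_ ?_
  · intro k l hkl
    have h1 := congrArg norm (inv_injective hkl)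
    rw [hnorm, hnorm] at h1
    have h2 : K + k + 1 = K + l + 1 := by exact_mod_cast h1
    omega
  · intro k
    set t : F := (((K + k + 1 : ℕ) : F))⁻¹ with ht
    have hball' : a₀ + t • (⟨b, hb⟩ : E) ∈ Metric.ball a₀ ε := by
      rw [mem_ball_iff_norm, add_sub_cancel_left, norm_smul, ht, norm_inv, hnorm]
      have hpos : (0 : ℝ) < ((K + k + 1 : ℕ) : ℝ) := by positivity
      rw [inv_mul_lt_iff₀ hpos]
      have h1 : ‖b‖ < K * ε := (div_lt_iff₀ hε).1 hK
      have h2 : (K : ℝ) * ε ≤ ((K + k + 1 : ℕ) : ℝ) * ε := by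
        gcongr
        omega
      exact lt_of_lt_of_le h1 h2
    have hset := interior_subset (hball hball')
    have h0 : nupow ((a₀ : A) + t • b) n = 0 := hset
    rw [Set.mem_ofPred_eq, ← hc, Submodule.mem_bot, ← Unitization.inr_smul, ← Unitization.inr_add,
      ← inr_nupow, h0, Unitization.inr_zero]

/-! ### Long products of homogeneous elements -/

section Homogeneous

variable {S F A : Type*} [CancelMonoid S] [Field F] [NonUnitalRing A] [Module F A]
  [IsScalarTower F A A] [SMulCommClass F A A]

/-- The initial segment `a 0 * ⋯ * a (k - 1)`, computed in a monoid. -/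
def initialProd {M : Type*} [Monoid M] (a : ℕ → M) : ℕ → M
  | 0 => 1
  | k + 1 => initialProd a k * a k

theorem exists_block (𝒜 : S → Submodule F A)
    (hmul : ∀ s t : S, ∀ x ∈ 𝒜 s, ∀ y ∈ 𝒜 t, x * y ∈ 𝒜 (s * t))
    (a : ℕ → A) (s : ℕ → S) (h : ∀ i, a i ∈ 𝒜 (s i)) (i m : ℕ) :
    ∃ r : S, ∃ y ∈ 𝒜 r, initialProd s (i + m + 1) = initialProd s i * r ∧
      initialProd (fun j => (Unitization.inr (a j) : Unitization F A)) (i + m + 1) =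
        initialProd (fun j => (Unitization.inr (a j) : Unitization F A)) i * Unitization.inr y := by
  induction m with
  | zero => exact ⟨s i, a i, h i, rfl, rfl⟩
  | succ m ih =>
    obtain ⟨r, y, hy, h1, h2⟩ := ih
    refine ⟨r * s (i + m + 1), y * a (i + m + 1), hmul _ _ _ hy _ (h _), ?_, ?_⟩
    · rw [← add_assoc, initialProd, h1, mul_assoc]
    · rw [← add_assoc, initialProd, h2, mul_assoc, Unitization.inr_mul]

/-- If the degree `g` of the initial segment of length `k` already occurs at the earlier lengths in
`K`, then that initial segment ends in a product of `K.card` blocks of degree `1`. -/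
theorem initialProd_mem (𝒜 : S → Submodule F A)
    (hmul : ∀ s t : S, ∀ x ∈ 𝒜 s, ∀ y ∈ 𝒜 t, x * y ∈ 𝒜 (s * t))
    (a : ℕ → A) (s : ℕ → S) (h : ∀ i, a i ∈ 𝒜 (s i)) (g : S) (K : Finset ℕ) :
    (∀ j ∈ K, initialProd s j = g) → ∀ k, (∀ j ∈ K, j < k) → initialProd s k = g →
      initialProd (fun j => (Unitization.inr (a j) : Unitization F A)) k ∈
        (⊤ : Submodule F (Unitization F A)) *
          ((𝒜 1).map (Unitization.inrHom F F A)) ^ K.card := by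
  induction K using Finset.induction_on_max with
  | empty =>
    intro _ k _ _
    simp
  | insert i K hi ih =>
    intro hg k hk hkg
    have hig : initialProd s i = g := hg i (Finset.mem_insert_self _ _)
    have hinit := ih (fun j hj => hg j (Finset.mem_insert_of_mem hj)) i hi hig
    obtain ⟨m, rfl⟩ : ∃ m, k = i + m + 1 :=
      ⟨k - i - 1, by have := hk i (Finset.mem_insert_self _ _); omega⟩
    obtain ⟨r, y, hy, h1, h2⟩ := exists_block 𝒜 hmul a s h i m
    have hr : r = 1 := by
      rw [hkg, hig] at h1
      exact (mul_eq_left.1 h1.symm)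
    subst hr
    rw [Finset.card_insert_of_notMem fun hiK => lt_irrefl i (hi i hiK), pow_succ, ← mul_assoc, h2]
    exact Submodule.mul_mem_mul hinit ⟨y, hy, rfl⟩

theorem homogeneous_prod_eq_zero (𝒜 : S → Submodule F A)
    (hmul : ∀ s t : S, ∀ x ∈ 𝒜 s, ∀ y ∈ 𝒜 t, x * y ∈ 𝒜 (s * t))
    (T : Finset S) (hT : ∀ s, 𝒜 s ≠ ⊥ → s ∈ T) (N : ℕ)
    (hN : ((𝒜 1).map (Unitization.inrHom F F A)) ^ N = ⊥)
    (a : ℕ → A) (s : ℕ → S) (h : ∀ i, a i ∈ 𝒜 (s i)) :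
    initialProd (fun j => (Unitization.inr (a j) : Unitization F A)) (T.card * N + 1) = 0 := by
  classical
  by_contra hne
  set Q := initialProd (fun j => (Unitization.inr (a j) : Unitization F A)) with hQ
  have hQne : ∀ k ≤ T.card * N + 1, Q k ≠ 0 := by
    intro k hk h0
    have : ∀ m, Q (k + m) = 0 := by
      intro m
      induction m with
      | zero => exact h0
      | succ m ih => rw [← add_assoc, hQ, initialProd, ← hQ, ih, zero_mul]
    apply hne
    rw [← this (T.card * N + 1 - k)]
    congr 1
    omega
  have hdeg : ∀ k ∈ Finset.Icc 1 (T.card * N + 1), initialProd s k ∈ T := by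
    intro k hk
    rw [Finset.mem_Icc] at hk
    apply hT
    intro hbot
    obtain ⟨r, y, hy, h1, h2⟩ := exists_block 𝒜 hmul a s h 0 (k - 1)
    rw [show 0 + (k - 1) + 1 = k by omega] at h1 h2
    have hr : initialProd s k = r := by rw [h1, initialProd, one_mul]
    rw [← hr, hbot, Submodule.mem_bot] at hy
    apply hQne k hk.2
    rw [hQ, h2, hy, Unitization.inr_zero, mul_zero]
  obtain ⟨g, -, hg⟩ := Finset.exists_lt_card_fiber_of_mul_lt_card_of_maps_to hdeg
    (n := N) (by simp)
  set K := {k ∈ Finset.Icc 1 (T.card * N + 1) | initialProd s k = g} with hK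
  have hKne : K.Nonempty := Finset.card_pos.1 (by omega)
  have hkK := K.max'_mem hKne
  have hmem := initialProd_mem 𝒜 hmul a s h g (K.erase (K.max' hKne))
    (fun j hj => (Finset.mem_filter.1 (Finset.mem_of_mem_erase hj)).2) (K.max' hKne)
    (fun j hj => K.lt_max'_of_mem_erase_max' hKne hj) (Finset.mem_filter.1 hkK).2
  rw [Finset.card_erase_of_mem hkK, show K.card - 1 = N + (K.card - 1 - N) by omega, pow_add, hN,
    Submodule.bot_mul, Submodule.mul_bot, Submodule.mem_bot] at hmem
  exact hQne _ (Finset.mem_Icc.1 (Finset.mem_filter.1 hkK).1).2 hmem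

theorem initialProd_congr {M : Type*} [Monoid M] (a b : ℕ → M) (k : ℕ)
    (h : ∀ j < k, a j = b j) : initialProd a k = initialProd b k := by
  induction k with
  | zero => rfl
  | succ k ih =>
    rw [initialProd, initialProd, ih fun j hj => h j (by omega), h k (by omega)]

theorem exists_initialProd_of_mem_pow (𝒜 : S → Submodule F A) (k : ℕ) (x : Unitization F A)
    (hx : x ∈ {u : Unitization F A | ∃ s, ∃ y ∈ 𝒜 s, Unitization.inr y = u} ^ k) :
    ∃ (a : ℕ → A) (s : ℕ → S), (∀ i, a i ∈ 𝒜 (s i)) ∧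
      initialProd (fun j => (Unitization.inr (a j) : Unitization F A)) k = x := by
  induction k generalizing x with
  | zero =>
    rw [pow_zero, Set.mem_one] at hx
    exact ⟨fun _ => 0, fun _ => 1, fun _ => Submodule.zero_mem _, hx.symm⟩
  | succ k ih =>
    rw [pow_succ, Set.mem_mul] at hx
    obtain ⟨u, hu, v, ⟨r, y, hy, rfl⟩, rfl⟩ := hx
    obtain ⟨a, s, h, rfl⟩ := ih u hu
    refine ⟨fun i => if i = k then y else a i, fun i => if i = k then r else s i, ?_, ?_⟩
    · intro i
      by_cases hi : i = k
      · simpa [hi] using hy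
      · simpa [hi] using h i
    · rw [initialProd]
      congr 1
      · refine initialProd_congr _ _ _ fun j hj => ?_
        simp [hj.ne]
      · simp

end Homogeneous

theorem inr_foldl_mem {F A : Type*} [Field F] [NonUnitalRing A] [Module F A]
    [IsScalarTower F A A] [SMulCommClass F A A] (I : Submodule F (Unitization F A))
    (hI : ∀ a : A, (Unitization.inr a : Unitization F A) ∈ I) (a : A) (l : List A) :
    (Unitization.inr (l.foldl (· * ·) a) : Unitization F A) ∈ I ^ (l.length + 1) := by
  induction l using List.reverseRecOn with
  | nil => simpa using hI a
  | append_singleton l b ih =>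
    rw [List.foldl_append, List.length_append, List.foldl_cons, List.foldl_nil,
      Unitization.inr_mul, List.length_singleton, pow_succ]
    exact Submodule.mul_mem_mul ih (hI b)

/-- Let `A` be a complete non-unital normed algebra over a normed field of characteristic zero
(with arithmetic norm), graded by a cancellative monoid `S` with only finitely many nonzero
components and closed identity component. If the identity component is nil, then `A` is
nilpotent. -/
theorem nilpotent_of_graded_identity_component_nil
    (S : Type*) [CancelMonoid S] [DecidableEq S]
    (F : Type*) [NormedField F]
    (A : Type*) [NonUnitalNormedRing A] [NormedSpace F A]
    [IsScalarTower F A A] [SMulCommClass F A A] [CompleteSpace A]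
    (hnorm : ∀ n : ℕ, ‖(n : F)‖ = n)
    (𝒜 : S → Submodule F A) [DirectSum.Decomposition 𝒜]
    (hmul : ∀ s t : S, ∀ x ∈ 𝒜 s, ∀ y ∈ 𝒜 t, x * y ∈ 𝒜 (s * t))
    (hfin : {s : S | 𝒜 s ≠ ⊥}.Finite)
    (hclosed : IsClosed ((𝒜 (1 : S) : Submodule F A) : Set A))
    (hnil : ∀ a ∈ 𝒜 (1 : S), ∃ n : ℕ, nupow a n = 0) :
    IsNilpotentAlgebra A := by
  classical
  have hchar : CharZero F := ⟨fun m n hmn => by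
    have := congrArg norm hmn
    rw [hnorm, hnorm] at this
    exact_mod_cast this⟩
  obtain ⟨n, hn⟩ := exists_nil_bound hnorm (𝒜 1) hclosed hnil
  obtain ⟨m, hm⟩ := nagata_higman ((𝒜 1).map (Unitization.inrHom F F A))
    (by
      rintro _ ⟨x, hx, rfl⟩ _ ⟨y, hy, rfl⟩
      refine ⟨x * y, ?_, by simp⟩
      simpa using hmul 1 1 x hx y hy) n ⊥ (by simp) (by simp)
    (by
      rintro _ ⟨x, hx, rfl⟩
      simpa using hn x hx)
  have hspan : ∀ a : A, (Unitization.inr a : Unitization F A) ∈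
      Submodule.span F {u : Unitization F A | ∃ s, ∃ y ∈ 𝒜 s, Unitization.inr y = u} := by
    intro a
    rw [← DirectSum.sum_support_decompose 𝒜 a, ← Unitization.inrHom_apply (S := F), map_sum]
    exact Submodule.sum_mem _ fun s _ => Submodule.subset_span ⟨s, _, SetLike.coe_mem _, rfl⟩
  refine ⟨hfin.toFinset.card * (m + 1) + 1, by omega, fun a l hl => ?_⟩
  have hmem := inr_foldl_mem _ hspan a l
  rw [hl, Submodule.span_pow] at hmem
  have hzero : Submodule.span F
      ({u : Unitization F A | ∃ s, ∃ y ∈ 𝒜 s, Unitization.inr y = u} ^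
        (hfin.toFinset.card * (m + 1) + 1)) ≤ ⊥ := by
    rw [Submodule.span_le]
    intro x hx
    obtain ⟨b, s, h, rfl⟩ := exists_initialProd_of_mem_pow 𝒜 _ x hx
    exact homogeneous_prod_eq_zero 𝒜 hmul hfin.toFinset
      (fun s hs => hfin.mem_toFinset.2 hs) (m + 1) (le_bot_iff.1 hm) b s h
  exact Unitization.inr_injective (R := F) ((hzero hmem).trans (Unitization.inr_zero F).symm)
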